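/- Let H be a group with finite generating set S, let q ∈ H, and suppose the cyclic subgroup ⟨q⟩ is stable in H (with respect to S, taking {q} as generating set of ⟨q⟩). Let G = H * ℤ be the free product of H with the infinite cyclic group generated by y. Then ⟨q⟩ is stable in G with respect to the finite generating set S ∪ {y}. -/

import Mathlib

/-!
The factor `H` is undistorted in `G = H * ℤ`, because killing `y` is a retraction `G → H` that does
not increase word length (`wordDist_inl`). This gives the quasi-isometric embedding.

For the fellow-travelling property, let `proj : G → H` be the closest-point projection in the tree
of cosets: it sends `h y^{n₁} h₁ y^{n₂} ⋯` to the initial letter `h`. Right multiplication by a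
generator can change `proj g` only if `g` lies in `H`, so every point `h` of `H` separates the
fibre of `proj` over `h` from its complement; in particular `proj g ≠ proj g'` forces
`d(g, proj g) ≤ d(g, g')` (`wordDist_proj_le`). A quasi-geodesic with endpoints in `H` that visits
the fibre over `h` must thus come uniformly close to `h` both before and after the visit, which
bounds the duration of the visit (`exists_near_proj`). Hence it stays uniformly close to its
projection, which is a quasi-geodesic of `H` with controlled constants, and stability in `H`
applies to the projections.

The projection is built from the universal property of the free product alone, without normal
forms: `G` acts on `G × H`, the second coordinate recording the initial letter.
-/


/-! Common definitions: word metrics, quasi-isometric embeddings, quasi-geodesics,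
stability, Gromov hyperbolicity, acylindrical actions, and the free product `H * ℤ`. -/

/-- The word metric on a group `G` with respect to a generating set `A`:
`wordDist A g h` is the least `n` such that `g⁻¹h` is a product of `n` elements
of `A ∪ A⁻¹`. -/
noncomputable def wordDist {G : Type*} [Group G] (A : Set G) (g h : G) : ℕ :=
  sInf {n : ℕ | ∃ l : List G, l.length = n ∧ (∀ x ∈ l, x ∈ A ∪ A⁻¹) ∧ l.prod = g⁻¹ * h}

/-- `f` is a quasi-isometric embedding of `(X, dX)` into `(Y, dY)`. -/
def IsQIE {X Y : Type*} (dX : X → X → ℝ) (dY : Y → Y → ℝ) (f : X → Y) : Prop :=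
  ∃ lam C : ℝ, 1 ≤ lam ∧ 0 ≤ C ∧ ∀ x x' : X,
    lam⁻¹ * dX x x' - C ≤ dY (f x) (f x') ∧ dY (f x) (f x') ≤ lam * dX x x' + C

/-- `σ` is a `(lam, C)`-quasi-geodesic on the integer interval `{0, …, n}`
in the space `X` with distance function `d`. -/
def IsQuasiGeodesicOn {X : Type*} (d : X → X → ℝ) (lam C : ℝ) (σ : ℤ → X) (n : ℤ) : Prop :=
  ∀ s t : ℤ, 0 ≤ s → s ≤ n → 0 ≤ t → t ≤ n →
    lam⁻¹ * |(s : ℝ) - (t : ℝ)| - C ≤ d (σ s) (σ t) ∧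
    d (σ s) (σ t) ≤ lam * |(s : ℝ) - (t : ℝ)| + C

/-- The subgroup `K` of `G` (with generating set `SK` for `K` and `T` for `G`) is stable:
the inclusion is a quasi-isometric embedding, and quasi-geodesics in `G` with common
endpoints in `K` uniformly fellow-travel. -/
def Stable {G : Type*} [Group G] (T : Set G) (K : Subgroup G) (SK : Set K) : Prop :=
  IsQIE (fun a b : K => (wordDist SK a b : ℝ)) (fun a b : G => (wordDist T a b : ℝ))
    (fun k : K => (k : G)) ∧
  ∀ lam C : ℝ, 1 ≤ lam → 0 ≤ C → ∃ M : ℝ, 0 ≤ M ∧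
    ∀ (σ τ : ℤ → G) (n m : ℤ), 0 ≤ n → 0 ≤ m →
      IsQuasiGeodesicOn (fun a b : G => (wordDist T a b : ℝ)) lam C σ n →
      IsQuasiGeodesicOn (fun a b : G => (wordDist T a b : ℝ)) lam C τ m →
      σ 0 = τ 0 → σ n = τ m → σ 0 ∈ K → σ n ∈ K →
      (∀ i : ℤ, 0 ≤ i → i ≤ n → ∃ j : ℤ, 0 ≤ j ∧ j ≤ m ∧
        (wordDist T (σ i) (τ j) : ℝ) ≤ M) ∧
      (∀ j : ℤ, 0 ≤ j → j ≤ m → ∃ i : ℤ, 0 ≤ i ∧ i ≤ n ∧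
        (wordDist T (τ j) (σ i) : ℝ) ≤ M)

/-- The four-point condition: `(X, d)` is Gromov hyperbolic. -/
def GromovHyperbolicD {X : Type*} (d : X → X → ℝ) : Prop :=
  ∃ δ : ℝ, 0 ≤ δ ∧ ∀ w x y z : X,
    d w x + d y z ≤ max (d w y + d x z) (d w z + d x y) + 2 * δ

/-- The left-multiplication action of `G` on itself with distance function `d`
is acylindrical. -/
def AcylindricalLeftMul {G : Type*} [Group G] (d : G → G → ℝ) : Prop :=
  ∀ R : ℝ, 0 ≤ R → ∃ (N : ℕ) (L : ℝ), 0 < N ∧ 0 < L ∧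
    ∀ x y : G, L ≤ d x y →
      {g : G | d x (g * x) ≤ R ∧ d y (g * y) ≤ R}.Finite ∧
      {g : G | d x (g * x) ≤ R ∧ d y (g * y) ≤ R}.ncard ≤ N

/-- `φ` is an isometric action of the group `G` on the metric space `X`. -/
def IsIsometricAction {G X : Type*} [Group G] [MetricSpace X] (φ : G → X → X) : Prop :=
  (∀ x : X, φ 1 x = x) ∧ (∀ g h : G, ∀ x : X, φ (g * h) x = φ g (φ h x)) ∧
    (∀ g : G, ∀ x y : X, dist (φ g x) (φ g y) = dist x y)

/-- The action `φ` of `G` on the metric space `X` is acylindrical. -/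
def AcylindricalAction {G X : Type*} [Group G] [MetricSpace X] (φ : G → X → X) : Prop :=
  ∀ R : ℝ, 0 ≤ R → ∃ (N : ℕ) (L : ℝ), 0 < N ∧ 0 < L ∧
    ∀ x y : X, L ≤ dist x y →
      {g : G | dist x (φ g x) ≤ R ∧ dist y (φ g y) ≤ R}.Finite ∧
      {g : G | dist x (φ g x) ≤ R ∧ dist y (φ g y) ≤ R}.ncard ≤ N

/-- A metric space is geodesic if any two points are joined by a geodesic. -/
def GeodesicSpace (X : Type*) [MetricSpace X] : Prop :=
  ∀ x y : X, ∃ γ : ℝ → X, γ 0 = x ∧ γ (dist x y) = y ∧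
    ∀ s t : ℝ, s ∈ Set.Icc 0 (dist x y) → t ∈ Set.Icc 0 (dist x y) →
      dist (γ s) (γ t) = |s - t|

/-- A group is virtually cyclic if it has a cyclic subgroup of finite index. -/
def VirtuallyCyclic (G : Type*) [Group G] : Prop :=
  ∃ K : Subgroup G, IsCyclic ↥K ∧ K.index ≠ 0

/-- The free product `H * ℤ`. -/
abbrev FPZ (H : Type*) [Group H] : Type _ := Monoid.Coprod H (Multiplicative ℤ)

/-- The canonical embedding `H →* H * ℤ`. -/
def fpzInl (H : Type*) [Group H] : H →* FPZ H := Monoid.Coprod.inl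

/-- The generator `y` of the `ℤ` factor of `H * ℤ`. -/
def fpzY (H : Type*) [Group H] : FPZ H := Monoid.Coprod.inr (Multiplicative.ofAdd 1)

open Monoid

/-! ### Word metrics -/

section WordMetric

variable {G : Type*} [Group G] {A : Set G}

theorem wordDist_le_length {g h : G} (l : List G) (hl : ∀ x ∈ l, x ∈ A ∪ A⁻¹)
    (hp : l.prod = g⁻¹ * h) : wordDist A g h ≤ l.length :=
  Nat.sInf_le ⟨l, rfl, hl, hp⟩

theorem exists_list_wordDist (hA : Subgroup.closure A = ⊤) (g h : G) :
    ∃ l : List G, l.length = wordDist A g h ∧ (∀ x ∈ l, x ∈ A ∪ A⁻¹) ∧ l.prod = g⁻¹ * h := by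
  have hmem : g⁻¹ * h ∈ (Subgroup.closure A).toSubmonoid := by simp [hA]
  rw [Subgroup.closure_toSubmonoid] at hmem
  obtain ⟨l, hl, hp⟩ := Submonoid.exists_list_of_mem_closure hmem
  exact Nat.sInf_mem (s := {n : ℕ | ∃ l : List G, l.length = n ∧ (∀ x ∈ l, x ∈ A ∪ A⁻¹) ∧
    l.prod = g⁻¹ * h}) ⟨l.length, l, rfl, hl, hp⟩

theorem wordDist_self (g : G) : wordDist A g g = 0 :=
  Nat.le_zero.1 (wordDist_le_length [] (by simp) (by simp))

theorem wordDist_triangle (hA : Subgroup.closure A = ⊤) (g h k : G) :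
    wordDist A g k ≤ wordDist A g h + wordDist A h k := by
  obtain ⟨l, hl, hlA, hlp⟩ := exists_list_wordDist hA g h
  obtain ⟨m, hm, hmA, hmp⟩ := exists_list_wordDist hA h k
  rw [← hl, ← hm, ← List.length_append]
  refine wordDist_le_length _ (fun x hx => ?_) (by rw [List.prod_append, hlp, hmp]; group)
  rcases List.mem_append.1 hx with hx | hx
  exacts [hlA x hx, hmA x hx]

theorem wordDist_comm_le (hA : Subgroup.closure A = ⊤) (g h : G) :
    wordDist A h g ≤ wordDist A g h := by
  obtain ⟨l, hl, hlA, hlp⟩ := exists_list_wordDist hA g h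
  rw [← hl, show l.length = (l.map (·⁻¹)).reverse.length by simp]
  refine wordDist_le_length _ (fun x hx => ?_) ?_
  · obtain ⟨y, hy, rfl⟩ := List.mem_map.1 (List.mem_reverse.1 hx)
    rcases hlA y hy with h | h
    · exact Or.inr (by simpa using h)
    · exact Or.inl (by simpa using h)
  · rw [← List.prod_inv_reverse, hlp]; group

theorem wordDist_comm (hA : Subgroup.closure A = ⊤) (g h : G) :
    wordDist A g h = wordDist A h g :=
  le_antisymm (wordDist_comm_le hA h g) (wordDist_comm_le hA g h)

/-- No generation hypothesis is needed: if `g⁻¹ * h` is not a product of generators then both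
sides take the value `0 = sInf ∅`. -/
theorem wordDist_image {K : Type*} [Group K] (f : G →* K) (hf : Function.Injective f) (g h : G) :
    wordDist (f '' A) (f g) (f h) = wordDist A g h := by
  unfold wordDist
  congr 1
  ext n
  constructor
  · rintro ⟨l, rfl, hl, hp⟩
    have : ∃ m : List G, m.map f = l ∧ ∀ x ∈ m, x ∈ A ∪ A⁻¹ := by
      clear hp
      induction l with
      | nil => exact ⟨[], by simp⟩
      | cons a l ih =>
        obtain ⟨m, hm, hmA⟩ := ih fun x hx => hl x (List.mem_cons_of_mem _ hx)
        have : ∃ b, f b = a ∧ b ∈ A ∪ A⁻¹ := by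
          rcases hl a List.mem_cons_self with ⟨b, hb, hba⟩ | ⟨b, hb, hba⟩
          · exact ⟨b, hba, Or.inl hb⟩
          · exact ⟨b⁻¹, by simp [hba], Or.inr (by simpa using hb)⟩
        obtain ⟨b, hba, hb⟩ := this
        refine ⟨b :: m, by simp [hba, hm], fun x hx => ?_⟩
        rcases List.mem_cons.1 hx with rfl | hx
        exacts [hb, hmA x hx]
    obtain ⟨m, rfl, hmA⟩ := this
    refine ⟨m, by simp, hmA, hf ?_⟩
    rw [map_list_prod, hp]; simp
  · rintro ⟨l, rfl, hl, hp⟩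
    refine ⟨l.map f, by simp, fun x hx => ?_, ?_⟩
    · obtain ⟨b, hb, rfl⟩ := List.mem_map.1 hx
      rcases hl b hb with h | h
      · exact Or.inl ⟨b, h, rfl⟩
      · exact Or.inr ⟨b⁻¹, h, by simp⟩
    · rw [← map_list_prod, hp]; simp

end WordMetric

section FreeProduct

variable {H : Type*} [Group H]

/-! ### The factor `H` is isometrically embedded -/

/-- The generating set `S ∪ {y}` of `H * ℤ`. -/
def fpzGen (S : Set H) : Set (FPZ H) := (⇑(fpzInl H)) '' S ∪ {fpzY H}

theorem fpzInl_injective : Function.Injective (fpzInl H) := Coprod.inl_injective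

theorem closure_fpzGen {S : Set H} (hS : Subgroup.closure S = ⊤) :
    Subgroup.closure (fpzGen S) = ⊤ := by
  have hy : Subgroup.closure {Multiplicative.ofAdd (1 : ℤ)} = ⊤ := by
    rw [← Subgroup.zpowers_eq_closure, Subgroup.eq_top_iff']
    exact fun k => ⟨k.toAdd, by simp [← ofAdd_zsmul]⟩
  rw [fpzGen, Subgroup.closure_union, ← MonoidHom.map_closure, hS, fpzY,
    ← Set.image_singleton, ← MonoidHom.map_closure, hy, ← MonoidHom.range_eq_map,
    ← MonoidHom.range_eq_map]
  exact Coprod.range_inl_sup_range_inr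

theorem mem_fpzGen {S : Set H} {x : FPZ H} (hx : x ∈ fpzGen S ∪ (fpzGen S)⁻¹) :
    (∃ s ∈ S ∪ S⁻¹, x = fpzInl H s) ∨ ∃ k : Multiplicative ℤ, x = Coprod.inr k := by
  rcases hx with (⟨s, hs, rfl⟩ | hx) | (⟨s, hs, hx⟩ | hx)
  · exact Or.inl ⟨s, Or.inl hs, rfl⟩
  · exact Or.inr ⟨_, hx⟩
  · exact Or.inl ⟨s⁻¹, Or.inr (by simpa using hs), by rw [map_inv, hx, inv_inv]⟩
  · refine Or.inr ⟨(Multiplicative.ofAdd 1)⁻¹, ?_⟩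
    rw [map_inv, ← inv_eq_iff_eq_inv]
    exact hx

theorem wordDist_inl {S : Set H} (hS : Subgroup.closure S = ⊤) (a b : H) :
    wordDist (fpzGen S) (fpzInl H a) (fpzInl H b) = wordDist S a b := by
  apply le_antisymm
  · obtain ⟨l, hl, hlS, hlp⟩ := exists_list_wordDist hS a b
    rw [← hl, ← List.length_map (f := fpzInl H)]
    refine wordDist_le_length _ (fun x hx => ?_) ?_
    · obtain ⟨s, hs, rfl⟩ := List.mem_map.1 hx
      rcases hlS s hs with h | h
      · exact Or.inl (Or.inl ⟨s, h, rfl⟩)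
      · exact Or.inr (Or.inl ⟨s⁻¹, h, by simp⟩)
    · rw [← map_list_prod, hlp]; simp
  · obtain ⟨l, hl, hlS, hlp⟩ := exists_list_wordDist (closure_fpzGen hS) (fpzInl H a) (fpzInl H b)
    -- Killing `y` deletes the letters `y^{±1}` from a word and keeps the others.
    have : ∃ m : List H, m.length ≤ l.length ∧ (∀ x ∈ m, x ∈ S ∪ S⁻¹) ∧
        m.prod = Coprod.fst l.prod := by
      clear hl hlp
      induction l with
      | nil => exact ⟨[], by simp⟩
      | cons x l ih =>
        obtain ⟨m, hm, hmS, hmp⟩ := ih fun x hx => hlS x (List.mem_cons_of_mem _ hx)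
        rcases mem_fpzGen (hlS x List.mem_cons_self) with ⟨s, hs, rfl⟩ | ⟨k, rfl⟩
        · refine ⟨s :: m, by simpa using hm, fun x hx => ?_, by simp [hmp, fpzInl]⟩
          rcases List.mem_cons.1 hx with rfl | hx
          exacts [hs, hmS x hx]
        · exact ⟨m, by simp; omega, hmS, by simp [hmp]⟩
    obtain ⟨m, hm, hmS, hmp⟩ := this
    rw [← hl]
    refine (wordDist_le_length m hmS ?_).trans hm
    rw [hmp, hlp]; simp [fpzInl]

/-! ### The projection onto `H` -/

open Classical in
/-- The action of `H` on `(H * ℤ) × H`: translate the first coordinate, and translate the second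
one precisely when the first one lies in `H`. Inverses turn right translations into a left
action. -/
noncomputable def projActH : H →* Function.End (FPZ H × H) where
  toFun h := fun p => (p.1 * (fpzInl H h)⁻¹,
    if p.1 ∈ (fpzInl H).range then p.2 * h⁻¹ else p.2)
  map_one' := by
    funext p
    refine Prod.ext (by simp; rfl) (by simp; rfl)
  map_mul' h k := by
    funext p
    have hk : p.1 * (fpzInl H k)⁻¹ ∈ (fpzInl H).range ↔ p.1 ∈ (fpzInl H).range :=
      Subgroup.mul_mem_cancel_right _ (inv_mem ⟨k, rfl⟩)
    change _ = (p.1 * (fpzInl H k)⁻¹ * (fpzInl H h)⁻¹,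
      if p.1 * (fpzInl H k)⁻¹ ∈ (fpzInl H).range then
        (if p.1 ∈ (fpzInl H).range then p.2 * k⁻¹ else p.2) * h⁻¹
      else if p.1 ∈ (fpzInl H).range then p.2 * k⁻¹ else p.2)
    simp only [hk]
    by_cases hp : p.1 ∈ (fpzInl H).range <;> simp [hp, mul_assoc]

/-- The action of `ℤ` on `(H * ℤ) × H` by translation of the first coordinate. -/
def projActZ : Multiplicative ℤ →* Function.End (FPZ H × H) where
  toFun k := fun p => (p.1 * (Coprod.inr k)⁻¹, p.2)
  map_one' := by
    funext p
    exact Prod.ext (by simp; rfl) rfl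
  map_mul' h k := by
    funext p
    change _ = (p.1 * (Coprod.inr k)⁻¹ * (Coprod.inr h)⁻¹, p.2)
    simp [mul_assoc]

/-- The action of `H * ℤ` on `(H * ℤ) × H`. -/
noncomputable def projAct : FPZ H →* Function.End (FPZ H × H) := Coprod.lift projActH projActZ

/-- The projection of `H * ℤ` to `H`: the initial letter in `H` of the normal form. -/
noncomputable def proj (g : FPZ H) : H := (projAct g⁻¹ (1, 1)).2

theorem projAct_mul (a b : FPZ H) (p : FPZ H × H) :
    projAct (a * b) p = projAct a (projAct b p) := by
  rw [map_mul]; rfl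

open Classical in
theorem projAct_inl (h : H) (p : FPZ H × H) :
    projAct (fpzInl H h) p = (p.1 * (fpzInl H h)⁻¹,
      if p.1 ∈ (fpzInl H).range then p.2 * h⁻¹ else p.2) := rfl

theorem projAct_inr (k : Multiplicative ℤ) (p : FPZ H × H) :
    projAct (Coprod.inr k) p = (p.1 * (Coprod.inr k)⁻¹, p.2) := rfl

theorem projAct_fst (g : FPZ H) (p : FPZ H × H) : (projAct g p).1 = p.1 * g⁻¹ := by
  induction g using Coprod.induction_on generalizing p with
  | inl h => exact congrArg Prod.fst (projAct_inl h p)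
  | inr k => exact congrArg Prod.fst (projAct_inr k p)
  | mul a b ha hb => rw [projAct_mul, ha, hb, mul_inv_rev, mul_assoc]

theorem projAct_inv_one (g : FPZ H) : projAct g⁻¹ (1, 1) = (g, proj g) :=
  Prod.ext (by simp [projAct_fst]) rfl

theorem proj_mul_inr (g : FPZ H) (k : Multiplicative ℤ) : proj (g * Coprod.inr k) = proj g := by
  rw [proj, mul_inv_rev, projAct_mul, projAct_inv_one, ← map_inv, projAct_inr]

theorem proj_mul_inl_of_mem {g : FPZ H} (hg : g ∈ (fpzInl H).range) (h : H) :
    proj (g * fpzInl H h) = proj g * h := by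
  rw [proj, mul_inv_rev, projAct_mul, projAct_inv_one, ← map_inv, projAct_inl]
  simp only [if_pos hg, inv_inv]

theorem proj_mul_inl_of_notMem {g : FPZ H} (hg : g ∉ (fpzInl H).range) (h : H) :
    proj (g * fpzInl H h) = proj g := by
  rw [proj, mul_inv_rev, projAct_mul, projAct_inv_one, ← map_inv, projAct_inl]
  simp only [if_neg hg]

theorem proj_inl (h : H) : proj (fpzInl H h) = h := by
  have h1 : proj (1 : FPZ H) = 1 := by
    rw [proj, inv_one, map_one]; rfl
  simpa [h1] using proj_mul_inl_of_mem (one_mem (fpzInl H).range) h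

/-- A step along an edge of the Cayley graph changes the projection only inside `H`. -/
theorem eq_inl_of_proj_mul_ne {S : Set H} {g x : FPZ H} (hx : x ∈ fpzGen S ∪ (fpzGen S)⁻¹)
    (hne : proj (g * x) ≠ proj g) : g = fpzInl H (proj g) := by
  rcases mem_fpzGen hx with ⟨s, -, rfl⟩ | ⟨k, rfl⟩
  · by_cases hg : g ∈ (fpzInl H).range
    · obtain ⟨a, rfl⟩ := hg
      rw [proj_inl]
    · exact absurd (proj_mul_inl_of_notMem hg s) hne
  · exact absurd (proj_mul_inr g k) hne

/-- A path leaving the fibre of `proj` over `h` passes through `h`. -/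
theorem wordDist_proj_le {S : Set H} (hS : Subgroup.closure S = ⊤) {g g' : FPZ H}
    (hne : proj g ≠ proj g') :
    wordDist (fpzGen S) g (fpzInl H (proj g)) ≤ wordDist (fpzGen S) g g' := by
  obtain ⟨l, hl, hlS, hlp⟩ := exists_list_wordDist (closure_fpzGen hS) g g'
  have key : ∀ l : List (FPZ H), ∀ g : FPZ H, (∀ x ∈ l, x ∈ fpzGen S ∪ (fpzGen S)⁻¹) →
      proj g ≠ proj (g * l.prod) → ∃ m : List (FPZ H), m.length ≤ l.length ∧
        (∀ x ∈ m, x ∈ fpzGen S ∪ (fpzGen S)⁻¹) ∧ m.prod = g⁻¹ * fpzInl H (proj g) := by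
    intro l
    induction l with
    | nil => intro g _ h; simp at h
    | cons x l ih =>
      intro g hl h
      by_cases hx : proj (g * x) = proj g
      · obtain ⟨m, hm, hmS, hmp⟩ := ih (g * x) (fun z hz => hl z (List.mem_cons_of_mem _ hz))
          (by rw [hx, mul_assoc, ← List.prod_cons]; exact h)
        refine ⟨x :: m, by simpa using hm, fun z hz => ?_, ?_⟩
        · rcases List.mem_cons.1 hz with rfl | hz
          exacts [hl _ List.mem_cons_self, hmS z hz]
        · rw [List.prod_cons, hmp, hx]; group
      · have := eq_inl_of_proj_mul_ne (hl x List.mem_cons_self) hx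
        exact ⟨[], by simp, by simp, by rw [← this]; simp⟩
  obtain ⟨m, hm, hmS, hmp⟩ := key l g hlS (by rw [hlp]; simpa using hne)
  exact (wordDist_le_length m hmS hmp).trans (hm.trans hl.le)

/-! ### Quasi-geodesics stay close to their projections -/

/-- A quasi-geodesic starting in `H` comes close to `proj (σ i)` at or before time `i`: the last
time it enters the fibre of `σ i` will do. -/
theorem exists_near_proj {S : Set H} (hS : Subgroup.closure S = ⊤) {lam C : ℝ} (hlam : 1 ≤ lam)
    (hC : 0 ≤ C) {σ : ℤ → FPZ H} {n : ℤ}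
    (hσ : IsQuasiGeodesicOn (fun a b => (wordDist (fpzGen S) a b : ℝ)) lam C σ n)
    (h0 : σ 0 ∈ (fpzInl H).range) (i : ℕ) (hi : (i : ℤ) ≤ n) :
    ∃ s : ℤ, 0 ≤ s ∧ s ≤ i ∧
      (wordDist (fpzGen S) (σ s) (fpzInl H (proj (σ i))) : ℝ) ≤ lam + C := by
  induction i with
  | zero =>
    obtain ⟨a, ha⟩ := h0
    refine ⟨0, le_rfl, le_rfl, ?_⟩
    rw [Nat.cast_zero, ← ha, proj_inl, wordDist_self]
    push_cast
    linarith
  | succ i ih =>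
    push_cast at hi ⊢
    by_cases h : proj (σ (i + 1)) = proj (σ i)
    · obtain ⟨s, hs0, hsi, hs⟩ := ih (by omega)
      exact ⟨s, hs0, by omega, by rwa [h]⟩
    · refine ⟨i + 1, by omega, le_rfl, ?_⟩
      have h1 := (hσ (i + 1) i (by omega) (by omega) (by omega) (by omega)).2
      have h2 : (wordDist (fpzGen S) (σ (i + 1)) (fpzInl H (proj (σ (i + 1)))) : ℝ) ≤
          wordDist (fpzGen S) (σ (i + 1)) (σ i) := by
        exact_mod_cast wordDist_proj_le hS h
      push_cast at h1
      simp only [add_sub_cancel_left, abs_one, mul_one] at h1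
      exact h2.trans h1

theorem IsQuasiGeodesicOn.reverse {X : Type*} {d : X → X → ℝ} {lam C : ℝ} {σ : ℤ → X} {n : ℤ}
    (hσ : IsQuasiGeodesicOn d lam C σ n) :
    IsQuasiGeodesicOn d lam C (fun s => σ (n - s)) n := by
  intro s t hs hsn ht htn
  have := hσ (n - s) (n - t) (by omega) (by omega) (by omega) (by omega)
  push_cast at this
  rwa [show (n : ℝ) - s - (n - t) = -(s - t) by ring, abs_neg] at this

/-- A quasi-geodesic with endpoints in `H` is uniformly close to its projection: it is
`(lam + C)`-close to `proj (σ i)` both before and after time `i`, at times at most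
`lam * (2 * (lam + C) + C)` apart. -/
theorem wordDist_proj_le_const {S : Set H} (hS : Subgroup.closure S = ⊤) {lam C : ℝ}
    (hlam : 1 ≤ lam) (hC : 0 ≤ C) {σ : ℤ → FPZ H} {n : ℤ}
    (hσ : IsQuasiGeodesicOn (fun a b => (wordDist (fpzGen S) a b : ℝ)) lam C σ n)
    (h0 : σ 0 ∈ (fpzInl H).range) (hn : σ n ∈ (fpzInl H).range) (i : ℤ) (hi0 : 0 ≤ i)
    (hin : i ≤ n) :
    (wordDist (fpzGen S) (σ i) (fpzInl H (proj (σ i))) : ℝ) ≤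
      lam * (lam * (2 * (lam + C) + C)) + C + (lam + C) := by
  have hT := closure_fpzGen hS
  obtain ⟨s, hs0, hsi, hs⟩ := exists_near_proj hS hlam hC hσ h0 i.toNat (by omega)
  obtain ⟨t, ht0, hti, ht⟩ := exists_near_proj hS hlam hC hσ.reverse (by simpa using hn)
    (n - i).toNat (by omega)
  have e1 : (i.toNat : ℤ) = i := by omega
  have e2 : ((n - i).toNat : ℤ) = n - i := by omega
  rw [e1] at hs hsi
  simp only [e2, sub_sub_cancel] at ht hti
  have hst := (hσ s (n - t) (by omega) (by omega) (by omega) (by omega)).1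
  have his := (hσ i s (by omega) (by omega) (by omega) (by omega)).2
  have tri1 : (wordDist (fpzGen S) (σ s) (σ (n - t)) : ℝ) ≤
      wordDist (fpzGen S) (σ s) (fpzInl H (proj (σ i))) +
      wordDist (fpzGen S) (σ (n - t)) (fpzInl H (proj (σ i))) := by
    rw [wordDist_comm hT (σ (n - t))]
    exact_mod_cast wordDist_triangle hT _ _ _
  have tri2 : (wordDist (fpzGen S) (σ i) (fpzInl H (proj (σ i))) : ℝ) ≤
      wordDist (fpzGen S) (σ i) (σ s) + wordDist (fpzGen S) (σ s) (fpzInl H (proj (σ i))) := by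
    exact_mod_cast wordDist_triangle hT _ _ _
  have hL : |(s : ℝ) - ((n - t : ℤ) : ℝ)| ≤ lam * (2 * (lam + C) + C) := by
    have hpos : 0 < lam := by linarith
    rw [← inv_mul_le_iff₀ hpos]
    linarith
  have hle : |(i : ℝ) - s| ≤ |(s : ℝ) - ((n - t : ℤ) : ℝ)| := by
    have : |i - s| ≤ |s - (n - t)| := by
      rw [abs_of_nonneg (by omega), abs_of_nonpos (by omega)]; omega
    exact_mod_cast this
  have : lam * |(i : ℝ) - s| ≤ lam * (lam * (2 * (lam + C) + C)) :=
    mul_le_mul_of_nonneg_left (hle.trans hL) (by linarith)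
  linarith

/-- If `σ` stays `D`-close to `proj ∘ σ`, the latter is a quasi-geodesic of `H`. -/
theorem isQuasiGeodesicOn_proj {S : Set H} (hS : Subgroup.closure S = ⊤) {lam C D : ℝ}
    {σ : ℤ → FPZ H} {n : ℤ}
    (hσ : IsQuasiGeodesicOn (fun a b => (wordDist (fpzGen S) a b : ℝ)) lam C σ n)
    (hD : ∀ i, 0 ≤ i → i ≤ n →
      (wordDist (fpzGen S) (σ i) (fpzInl H (proj (σ i))) : ℝ) ≤ D) :
    IsQuasiGeodesicOn (fun a b => (wordDist S a b : ℝ)) lam (C + 2 * D)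
      (fun i => proj (σ i)) n := by
  have hT := closure_fpzGen hS
  intro s t hs hsn ht htn
  obtain ⟨h1, h2⟩ := hσ s t hs hsn ht htn
  dsimp only at h1 h2
  have ds := hD s hs hsn
  have dt := hD t ht htn
  have a1 := wordDist_triangle hT (σ s) (fpzInl H (proj (σ s))) (σ t)
  have a2 := wordDist_triangle hT (fpzInl H (proj (σ s))) (fpzInl H (proj (σ t))) (σ t)
  have b1 := wordDist_triangle hT (fpzInl H (proj (σ s))) (σ s) (fpzInl H (proj (σ t)))
  have b2 := wordDist_triangle hT (σ s) (σ t) (fpzInl H (proj (σ t)))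
  rw [wordDist_comm hT (fpzInl H (proj (σ t))) (σ t), wordDist_inl hS] at a2
  rw [wordDist_comm hT (fpzInl H (proj (σ s))) (σ s), wordDist_inl hS] at b1
  rify at a1 a2 b1 b2
  constructor <;> dsimp only <;> linarith

/-- Closeness of projections in `H` gives closeness in `H * ℤ`. -/
theorem wordDist_le_of_proj {S : Set H} (hS : Subgroup.closure S = ⊤) {D M : ℝ} {g g' : FPZ H}
    (hg : (wordDist (fpzGen S) g (fpzInl H (proj g)) : ℝ) ≤ D)
    (hg' : (wordDist (fpzGen S) g' (fpzInl H (proj g')) : ℝ) ≤ D)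
    (h : (wordDist S (proj g) (proj g') : ℝ) ≤ M) :
    (wordDist (fpzGen S) g g' : ℝ) ≤ M + 2 * D := by
  have hT := closure_fpzGen hS
  have a1 := wordDist_triangle hT g (fpzInl H (proj g)) g'
  have a2 := wordDist_triangle hT (fpzInl H (proj g)) (fpzInl H (proj g')) g'
  rw [wordDist_comm hT (fpzInl H (proj g')) g', wordDist_inl hS] at a2
  rify at a1 a2
  linarith

end FreeProduct

/-! ### Stability -/

/-- If `⟨q⟩` is stable in `H`, then `⟨q⟩` is stable in `G = H * ℤ`
with respect to the generating set `S ∪ {y}`. -/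
theorem stable_of_stable_in_factor (H : Type*) [Group H] (S : Set H) (hSfin : S.Finite)
    (hS : Subgroup.closure S = ⊤) (q : H)
    (hstable : Stable S (Subgroup.zpowers q) {⟨q, Subgroup.mem_zpowers q⟩}) :
    Stable ((⇑(fpzInl H)) '' S ∪ {fpzY H}) (Subgroup.zpowers (fpzInl H q))
      {⟨fpzInl H q, Subgroup.mem_zpowers _⟩} := by
  obtain ⟨⟨lam₀, C₀, hlam₀, hC₀, hqi⟩, hmorse⟩ := hstable
  change Stable (fpzGen S) _ _
  refine ⟨⟨lam₀, C₀, hlam₀, hC₀, ?_⟩, fun lam C hlam hC => ?_⟩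
  · have hmem : ∀ a : Subgroup.zpowers q, fpzInl H a ∈ Subgroup.zpowers (fpzInl H q) := by
      rintro ⟨_, k, rfl⟩
      exact ⟨k, by simp⟩
    let j : Subgroup.zpowers q →* Subgroup.zpowers (fpzInl H q) :=
      ((fpzInl H).comp (Subgroup.zpowers q).subtype).codRestrict _ hmem
    have hj : Function.Injective j := fun a b hab =>
      Subtype.ext (fpzInl_injective (congrArg Subtype.val hab))
    have hsurj : Function.Surjective j := by
      rintro ⟨_, k, rfl⟩
      exact ⟨⟨q ^ k, k, rfl⟩, Subtype.ext (map_zpow (fpzInl H) q k)⟩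
    have himg : ({⟨fpzInl H q, Subgroup.mem_zpowers _⟩} : Set (Subgroup.zpowers (fpzInl H q))) =
        j '' {⟨q, Subgroup.mem_zpowers q⟩} := by
      rw [Set.image_singleton]; rfl
    intro x x'
    obtain ⟨a, rfl⟩ := hsurj x
    obtain ⟨b, rfl⟩ := hsurj x'
    have hab : wordDist (fpzGen S) (j a : FPZ H) (j b) = wordDist S (a : H) b :=
      wordDist_inl hS _ _
    simp only [himg, wordDist_image j hj, hab]
    exact hqi a b
  · set D : ℝ := lam * (lam * (2 * (lam + C) + C)) + C + (lam + C) with hDdef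
    have hD : 0 ≤ D := by positivity
    obtain ⟨M, hM, hMM⟩ := hmorse lam (C + 2 * D) hlam (by positivity)
    refine ⟨M + 2 * D, by positivity, fun σ τ n m hn hm hσ hτ h0 h1 hK0 hKn => ?_⟩
    have hrange : ∀ g ∈ Subgroup.zpowers (fpzInl H q), g ∈ (fpzInl H).range := by
      rintro _ ⟨k, rfl⟩
      exact ⟨q ^ k, by simp⟩
    have hproj : ∀ g ∈ Subgroup.zpowers (fpzInl H q), proj g ∈ Subgroup.zpowers q := by
      rintro _ ⟨k, rfl⟩
      refine ⟨k, ?_⟩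
      dsimp only
      rw [← map_zpow, proj_inl]
    have nσ := wordDist_proj_le_const hS hlam hC hσ (hrange _ hK0) (hrange _ hKn)
    have nτ := wordDist_proj_le_const hS hlam hC hτ (h0 ▸ hrange _ hK0) (h1 ▸ hrange _ hKn)
    obtain ⟨c1, c2⟩ := hMM (fun i => proj (σ i)) (fun i => proj (τ i)) n m hn hm
      (isQuasiGeodesicOn_proj hS hσ nσ) (isQuasiGeodesicOn_proj hS hτ nτ)
      (congrArg proj h0) (congrArg proj h1) (hproj _ hK0) (hproj _ hKn)
    constructor
    · intro i hi hin
      obtain ⟨j, hj, hjm, h⟩ := c1 i hi hin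
      exact ⟨j, hj, hjm, wordDist_le_of_proj hS (nσ i hi hin) (nτ j hj hjm) h⟩
    · intro j hj hjm
      obtain ⟨i, hi, hin, h⟩ := c2 j hj hjm
      exact ⟨i, hi, hin, wordDist_le_of_proj hS (nτ j hj hjm) (nσ i hi hin) h⟩
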